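/- (Uniqueness for the fractional Dirichlet problem.) Let n ≥ 1, s ∈ (0,1), let Ω ⊂ ℝⁿ be a bounded open set, let f : Ω → ℝ and φ : ℝⁿ ∖ Ω → ℝ. Suppose u₁, u₂ : ℝⁿ → ℝ are bounded and continuous, satisfy u₁ = φ = u₂ on ℝⁿ ∖ Ω, and for i = 1, 2 and every x ∈ Ω the function y ↦ (2u_i(x) − u_i(x+y) − u_i(x−y))/|y|^{n+2s} is Lebesgue integrable on ℝⁿ with (c_{n,s}/2) ∫_{ℝⁿ} (2u_i(x) − u_i(x+y) − u_i(x−y))/|y|^{n+2s} dy = f(x). Then u₁ = u₂ on ℝⁿ. -/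

import Mathlib

open MeasureTheory Filter Metric Set
open scoped Topology

/-- The normalization constant `c_{n,s} = (∫_{ℝⁿ} (1 − cos ζ₁)/|ζ|^{n+2s} dζ)⁻¹`. -/
noncomputable def fracC (n : ℕ) (hn : 1 ≤ n) (s : ℝ) : ℝ :=
  (∫ ζ : EuclideanSpace ℝ (Fin n),
    (1 - Real.cos (ζ ⟨0, hn⟩)) / ‖ζ‖ ^ ((n : ℝ) + 2 * s))⁻¹

/-!
If two solutions differ, their difference `w` (up to sign) has a positive maximum over `ℝⁿ`,
attained at some `x ∈ Ω` because `w` vanishes off `Ω`. There the second difference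
`2 w(x) - w(x + y) - w(x - y)` is nonnegative, and it is positive on an open set of `y`, since
`x + y` leaves `Ω` for large `y`. Hence the integral defining `(-Δ)^s w (x)` is positive, whereas
it is a difference of two equal values. That the kernel of the fractional Laplacian is positive
rests on the integrability of `(1 - cos ζ₁) / |ζ|^{n+2s}`, without which `c_{n,s}` would be the
junk value `0`.
-/

section Nonlocal

variable {E : Type*} [AddGroup E]

/-- The symmetric second difference of `u` at `x` with increment `y`, with the sign making it
nonnegative at a maximum point `x`. -/
def secondDifference (u : E → ℝ) (x y : E) : ℝ :=
  2 * u x - u (x + y) - u (x - y)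

lemma secondDifference_sub (u v : E → ℝ) (x y : E) :
    secondDifference (u - v) x y = secondDifference u x y - secondDifference v x y := by
  simp only [secondDifference, Pi.sub_apply]
  ring

lemma secondDifference_zero_right (u : E → ℝ) (x : E) : secondDifference u x 0 = 0 := by
  simp only [secondDifference, add_zero, sub_zero]
  ring

lemma secondDifference_nonneg {u : E → ℝ} {x : E} (hmax : ∀ z, u z ≤ u x) (y : E) :
    0 ≤ secondDifference u x y := by
  unfold secondDifference
  linarith [hmax (x + y), hmax (x - y)]

lemma secondDifference_pos {u : E → ℝ} {x y : E} (hmax : ∀ z, u z ≤ u x)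
    (hlt : u (x + y) < u x) : 0 < secondDifference u x y := by
  unfold secondDifference
  linarith [hmax (x - y)]

variable [MeasurableSpace E] {μ : Measure E} {K u v : E → ℝ} {a b : ℝ} {x : E}

/-- `HasNonlocalLaplacianAt μ K u a x` says that the symmetric nonlocal operator with kernel `K`,
`∫ y, (2 * u x - u (x + y) - u (x - y)) * K y ∂μ`, converges absolutely at `x` with value `a`.
The fractional Laplacian `(-Δ)^s` on `ℝⁿ` is the case `K y = c_{n,s} / 2 / ‖y‖ ^ (n + 2 s)`. -/
structure HasNonlocalLaplacianAt (μ : Measure E) (K u : E → ℝ) (a : ℝ) (x : E) : Prop where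
  integrable : Integrable (fun y => secondDifference u x y * K y) μ
  integral_eq : ∫ y, secondDifference u x y * K y ∂μ = a

namespace HasNonlocalLaplacianAt

lemma of_const_mul {k : E → ℝ} {c : ℝ}
    (h : Integrable (fun y => secondDifference u x y / k y) μ ∧
      c * ∫ y, secondDifference u x y / k y ∂μ = a) :
    HasNonlocalLaplacianAt μ (fun y => c / k y) u a x := by
  have hkernel : (fun y => secondDifference u x y * (c / k y)) =
      fun y => c * (secondDifference u x y / k y) := by
    funext y
    ring
  constructor <;> rw [hkernel]
  · exact h.1.const_mul c
  · rw [integral_const_mul, h.2]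

lemma sub (hu : HasNonlocalLaplacianAt μ K u a x) (hv : HasNonlocalLaplacianAt μ K v b x) :
    HasNonlocalLaplacianAt μ K (u - v) (a - b) x := by
  constructor <;> simp only [secondDifference_sub, sub_mul]
  · exact hu.integrable.sub hv.integrable
  · rw [integral_sub hu.integrable hv.integrable, hu.integral_eq, hv.integral_eq]

end HasNonlocalLaplacianAt

end Nonlocal

lemma integral_pos_of_pos_on_isOpen {X : Type*} [TopologicalSpace X] [MeasurableSpace X]
    {μ : Measure X} [μ.IsOpenPosMeasure] {g : X → ℝ} {U : Set X} (hg : Integrable g μ)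
    (hg0 : ∀ x, 0 ≤ g x) (hU : IsOpen U) (hne : U.Nonempty) (hpos : ∀ x ∈ U, 0 < g x) :
    0 < ∫ x, g x ∂μ :=
  (integral_pos_iff_support_of_nonneg hg0 hg).2 <|
    (hU.measure_pos μ hne).trans_le <| measure_mono fun x hx => (hpos x hx).ne'

section MaximumPrinciple

variable {E : Type*} [AddGroup E] [TopologicalSpace E] [SeparatelyContinuousAdd E]
  [NoncompactSpace E] [MeasurableSpace E] {μ : Measure E} [μ.IsOpenPosMeasure]
  {K u v w : E → ℝ} {Ω : Set E}

lemma HasNonlocalLaplacianAt.pos_of_forall_le {a : ℝ} {x : E}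
    (h : HasNonlocalLaplacianAt μ K w a x) (hK : ∀ y ≠ 0, 0 < K y) (hΩ : IsCompact (closure Ω))
    (hmax : ∀ z, w z ≤ w x) (hlt : ∀ z ∉ Ω, w z < w x) : 0 < a := by
  have hlt' : ∀ z ∉ closure Ω, w z < w x := fun z hz =>
    hlt z fun hzΩ => hz (subset_closure hzΩ)
  have hnonneg : ∀ y, 0 ≤ secondDifference w x y * K y := by
    intro y
    obtain rfl | hy := eq_or_ne y 0
    · rw [secondDifference_zero_right, zero_mul]
    · exact mul_nonneg (secondDifference_nonneg hmax y) (hK y hy).le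
  obtain ⟨z, hz⟩ := (ne_univ_iff_exists_notMem _).1 hΩ.ne_univ
  rw [← h.integral_eq]
  refine integral_pos_of_pos_on_isOpen (U := (x + ·) ⁻¹' (closure Ω)ᶜ) h.integrable hnonneg
    (isClosed_closure.isOpen_compl.preimage (continuous_const_add x))
    ⟨-x + z, by simpa using hz⟩ fun y hy => ?_
  have hlt_y : w (x + y) < w x := hlt' _ hy
  have hy0 : y ≠ 0 := by
    rintro rfl
    simp at hlt_y
  exact mul_pos (secondDifference_pos hmax hlt_y) (hK y hy0)

theorem nonpos_of_hasNonlocalLaplacianAt_nonpos (hK : ∀ y ≠ 0, 0 < K y)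
    (hΩ : IsCompact (closure Ω)) (hw : UpperSemicontinuousOn w (closure Ω))
    (hext : ∀ x ∉ Ω, w x ≤ 0)
    (hL : ∀ x ∈ Ω, ∃ a ≤ 0, HasNonlocalLaplacianAt μ K w a x) (x : E) : w x ≤ 0 := by
  by_contra! hx
  have mem_of_pos : ∀ z, 0 < w z → z ∈ Ω := fun z hz =>
    by_contra fun hzΩ => (hext z hzΩ).not_gt hz
  obtain ⟨m, -, hm⟩ := hw.exists_isMaxOn ⟨x, subset_closure (mem_of_pos x hx)⟩ hΩ
  have hm_pos : 0 < w m := hx.trans_le (hm (subset_closure (mem_of_pos x hx)))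
  have hlt : ∀ z ∉ Ω, w z < w m := fun z hz => (hext z hz).trans_lt hm_pos
  have hmax : ∀ z, w z ≤ w m := fun z =>
    (em (z ∈ Ω)).elim (fun hz => hm (subset_closure hz)) fun hz => (hlt z hz).le
  obtain ⟨a, ha, hLa⟩ := hL m (mem_of_pos m hm_pos)
  exact ha.not_gt (hLa.pos_of_forall_le hK hΩ hmax hlt)

theorem le_of_hasNonlocalLaplacianAt_le (hK : ∀ y ≠ 0, 0 < K y) (hΩ : IsCompact (closure Ω))
    (hu : UpperSemicontinuousOn u (closure Ω)) (hv : LowerSemicontinuousOn v (closure Ω))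
    (hext : ∀ x ∉ Ω, u x ≤ v x)
    (hL : ∀ x ∈ Ω, ∃ a b, a ≤ b ∧
      HasNonlocalLaplacianAt μ K u a x ∧ HasNonlocalLaplacianAt μ K v b x) : u ≤ v := by
  have hsub : UpperSemicontinuousOn (u - v) (closure Ω) := by
    rw [sub_eq_add_neg]
    exact hu.add (continuous_neg.comp_lowerSemicontinuousOn_antitone hv fun _ _ => neg_le_neg)
  refine fun x => sub_nonpos.1 <| nonpos_of_hasNonlocalLaplacianAt_nonpos (μ := μ) hK hΩ hsub
    (fun z hz => sub_nonpos.2 (hext z hz)) (fun z hz => ?_) x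
  obtain ⟨a, b, hab, hLu, hLv⟩ := hL z hz
  exact ⟨a - b, sub_nonpos.2 hab, hLu.sub hLv⟩

theorem fractional_dirichlet_uniqueness_general {f : E → ℝ} (hK : ∀ y ≠ 0, 0 < K y)
    (hΩ : IsCompact (closure Ω)) (hu : ContinuousOn u (closure Ω))
    (hv : ContinuousOn v (closure Ω)) (hext : ∀ x ∉ Ω, u x = v x)
    (hLu : ∀ x ∈ Ω, HasNonlocalLaplacianAt μ K u (f x) x)
    (hLv : ∀ x ∈ Ω, HasNonlocalLaplacianAt μ K v (f x) x) : u = v :=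
  le_antisymm
    (le_of_hasNonlocalLaplacianAt_le hK hΩ hu.upperSemicontinuousOn hv.lowerSemicontinuousOn
      (fun x hx => (hext x hx).le) fun x hx => ⟨_, _, le_rfl, hLu x hx, hLv x hx⟩)
    (le_of_hasNonlocalLaplacianAt_le hK hΩ hv.upperSemicontinuousOn hu.lowerSemicontinuousOn
      (fun x hx => (hext x hx).ge) fun x hx => ⟨_, _, le_rfl, hLv x hx, hLu x hx⟩)

end MaximumPrinciple

lemma integrableOn_Ioi_min_one_rpow_mul_rpow {p q : ℝ} (hp : p < -1) (hpq : -1 < q + p) :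
    IntegrableOn (fun r : ℝ => min 1 (r ^ q) * r ^ p) (Ioi 0) := by
  have hmeas : Measurable fun r : ℝ => min 1 (r ^ q) * r ^ p := by fun_prop
  rw [← Ioc_union_Ioi_eq_Ioi (zero_le_one' ℝ)]
  refine IntegrableOn.union ?_ ?_
  · have hbound : IntegrableOn (fun r : ℝ => r ^ (q + p)) (Ioc 0 1) :=
      (intervalIntegral.intervalIntegrable_rpow' hpq).1
    refine Integrable.mono' hbound hmeas.aestronglyMeasurable ?_
    filter_upwards [ae_restrict_mem measurableSet_Ioc] with r hr
    have hr0 : 0 < r := hr.1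
    rw [Real.norm_of_nonneg (by positivity), Real.rpow_add hr0]
    gcongr
    exact min_le_right _ _
  · refine Integrable.mono' (integrableOn_Ioi_rpow_of_lt hp one_pos)
      hmeas.aestronglyMeasurable ?_
    filter_upwards [ae_restrict_mem measurableSet_Ioi] with r hr
    have hr0 : 0 < r := one_pos.trans hr
    rw [Real.norm_of_nonneg (by positivity)]
    exact mul_le_of_le_one_left (by positivity) (min_le_left _ _)

lemma one_sub_cos_le_two_mul_min_one_sq (t : ℝ) : 1 - Real.cos t ≤ 2 * min 1 (t ^ 2) := by
  rw [mul_min_of_nonneg _ _ zero_le_two]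
  refine le_min ?_ ?_
  · linarith [Real.neg_one_le_cos t]
  · linarith [Real.one_sub_sq_div_two_le_cos (x := t), sq_nonneg t]

lemma one_sub_cos_apply_le_mul_min_one_norm_sq {E : Type*} [SeminormedAddCommGroup E]
    [NormedSpace ℝ E] (ℓ : StrongDual ℝ E) (x : E) :
    1 - Real.cos (ℓ x) ≤ 2 * max 1 (‖ℓ‖ ^ 2) * min 1 (‖x‖ ^ 2) := by
  have hℓx : ℓ x ^ 2 ≤ max 1 (‖ℓ‖ ^ 2) * ‖x‖ ^ 2 := by
    calc ℓ x ^ 2 ≤ (‖ℓ‖ * ‖x‖) ^ 2 := sq_le_sq.2 ((ℓ.le_opNorm x).trans (le_abs_self _))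
      _ = ‖ℓ‖ ^ 2 * ‖x‖ ^ 2 := mul_pow _ _ _
      _ ≤ max 1 (‖ℓ‖ ^ 2) * ‖x‖ ^ 2 := by gcongr; exact le_max_right _ _
  calc 1 - Real.cos (ℓ x) ≤ 2 * min 1 (ℓ x ^ 2) := one_sub_cos_le_two_mul_min_one_sq _
    _ ≤ 2 * min (max 1 (‖ℓ‖ ^ 2) * 1) (max 1 (‖ℓ‖ ^ 2) * ‖x‖ ^ 2) := by
      gcongr
      rw [mul_one]
      exact le_max_left _ _
    _ = 2 * max 1 (‖ℓ‖ ^ 2) * min 1 (‖x‖ ^ 2) := by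
      rw [← mul_min_of_nonneg _ _ (by positivity), mul_assoc]

section LevyKernel

variable {E : Type*} [NormedAddCommGroup E] [NormedSpace ℝ E] [FiniteDimensional ℝ E]
  [MeasurableSpace E] [BorelSpace E] {μ : Measure E} [μ.IsAddHaarMeasure] {p : ℝ}

lemma integrable_min_one_norm_rpow_div_norm_rpow [Nontrivial E] {q : ℝ}
    (hp : (Module.finrank ℝ E : ℝ) < p) (hpq : p < Module.finrank ℝ E + q) :
    Integrable (fun x : E => min 1 (‖x‖ ^ q) / ‖x‖ ^ p) μ := by
  rw [integrable_fun_norm_addHaar μ (f := fun r : ℝ => min 1 (r ^ q) / r ^ p)]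
  refine (integrableOn_Ioi_min_one_rpow_mul_rpow (p := Module.finrank ℝ E - 1 - p) (q := q)
    (by linarith) (by linarith)).congr_fun (fun r (hr : 0 < r) => ?_) measurableSet_Ioi
  have hpolar : r ^ (Module.finrank ℝ E - 1) = r ^ ((Module.finrank ℝ E : ℝ) - 1) := by
    rw [← Real.rpow_natCast, Nat.cast_pred Module.finrank_pos]
  simp only [smul_eq_mul, hpolar, Real.rpow_sub hr _ p]
  ring

lemma integrable_one_sub_cos_div_norm_rpow [Nontrivial E] (ℓ : StrongDual ℝ E)
    (hp : (Module.finrank ℝ E : ℝ) < p) (hp' : p < Module.finrank ℝ E + 2) :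
    Integrable (fun x : E => (1 - Real.cos (ℓ x)) / ‖x‖ ^ p) μ := by
  have hbound : Integrable
      (fun x : E => 2 * max 1 (‖ℓ‖ ^ 2) * (min 1 (‖x‖ ^ (2 : ℝ)) / ‖x‖ ^ p)) μ :=
    (integrable_min_one_norm_rpow_div_norm_rpow hp hp').const_mul _
  have hmeas : Measurable fun x : E => (1 - Real.cos (ℓ x)) / ‖x‖ ^ p := by fun_prop
  refine hbound.mono' hmeas.aestronglyMeasurable (.of_forall fun x => ?_)
  have hcos : 0 ≤ 1 - Real.cos (ℓ x) := sub_nonneg.2 (Real.cos_le_one _)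
  rw [Real.norm_of_nonneg (by positivity), ← mul_div_assoc, Real.rpow_two]
  gcongr
  exact one_sub_cos_apply_le_mul_min_one_norm_sq ℓ x

theorem integral_one_sub_cos_div_norm_rpow_pos {ℓ : StrongDual ℝ E} (hℓ : ℓ ≠ 0)
    (hp : (Module.finrank ℝ E : ℝ) < p) (hp' : p < Module.finrank ℝ E + 2) :
    0 < ∫ x, (1 - Real.cos (ℓ x)) / ‖x‖ ^ p ∂μ := by
  obtain ⟨v, hv⟩ := DFunLike.ne_iff.1 hℓ
  have : Nontrivial E := ⟨v, 0, fun h => hv (by simp [h])⟩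
  have hℓ' : (ℓ : E →ₗ[ℝ] ℝ) ≠ 0 := by exact_mod_cast hℓ
  obtain ⟨z, hz⟩ : ∃ z, ℓ z = Real.pi := LinearMap.surjective hℓ' Real.pi
  refine integral_pos_of_pos_on_isOpen (U := {x | Real.cos (ℓ x) < 1})
    (integrable_one_sub_cos_div_norm_rpow ℓ hp hp')
    (fun x => div_nonneg (sub_nonneg.2 (Real.cos_le_one _)) (by positivity))
    (isOpen_lt (by fun_prop) continuous_const)
    ⟨z, by rw [mem_ofPred_eq, hz, Real.cos_pi]; norm_num⟩ fun x (hx : Real.cos (ℓ x) < 1) => ?_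
  have hx0 : x ≠ 0 := by
    rintro rfl
    simp at hx
  exact div_pos (sub_pos.2 hx) (Real.rpow_pos_of_pos (norm_pos_iff.2 hx0) _)

end LevyKernel

lemma fracC_pos (n : ℕ) (hn : 1 ≤ n) {s : ℝ} (hs : s ∈ Ioo (0 : ℝ) 1) : 0 < fracC n hn s := by
  let ℓ : StrongDual ℝ (EuclideanSpace ℝ (Fin n)) := EuclideanSpace.proj ⟨0, hn⟩
  have hℓ : ℓ ≠ 0 := DFunLike.ne_iff.2 ⟨EuclideanSpace.single ⟨0, hn⟩ 1, by simp [ℓ]⟩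
  have hdim : Module.finrank ℝ (EuclideanSpace ℝ (Fin n)) = n := finrank_euclideanSpace_fin
  have hpos : 0 < ∫ ζ, (1 - Real.cos (ℓ ζ)) / ‖ζ‖ ^ ((n : ℝ) + 2 * s) :=
    integral_one_sub_cos_div_norm_rpow_pos hℓ (by rw [hdim]; linarith [hs.1])
      (by rw [hdim]; linarith [hs.2])
  exact inv_pos.2 hpos

/-- Uniqueness for the fractional Dirichlet problem.  Two bounded
continuous functions solving pointwise (in the absolutely convergent
second-difference sense) `(−Δ)^s u = f` in a bounded open `Ω` with the same
exterior datum `φ` coincide everywhere. -/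
theorem fractional_dirichlet_uniqueness
    (n : ℕ) (hn : 1 ≤ n) (s : ℝ) (hs : s ∈ Set.Ioo (0:ℝ) 1)
    (Ω : Set (EuclideanSpace ℝ (Fin n))) (hΩo : IsOpen Ω) (hΩb : Bornology.IsBounded Ω)
    (f : EuclideanSpace ℝ (Fin n) → ℝ) (φ : EuclideanSpace ℝ (Fin n) → ℝ)
    (u₁ u₂ : EuclideanSpace ℝ (Fin n) → ℝ)
    (h₁bdd : ∃ M : ℝ, ∀ x, |u₁ x| ≤ M) (h₁cont : Continuous u₁)
    (h₂bdd : ∃ M : ℝ, ∀ x, |u₂ x| ≤ M) (h₂cont : Continuous u₂)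
    (h₁ext : ∀ x ∉ Ω, u₁ x = φ x) (h₂ext : ∀ x ∉ Ω, u₂ x = φ x)
    (h₁eq : ∀ x ∈ Ω,
      MeasureTheory.Integrable (fun y : EuclideanSpace ℝ (Fin n) =>
        (2 * u₁ x - u₁ (x + y) - u₁ (x - y)) / ‖y‖ ^ ((n : ℝ) + 2 * s)) ∧
      fracC n hn s / 2 *
        ∫ y : EuclideanSpace ℝ (Fin n),
          (2 * u₁ x - u₁ (x + y) - u₁ (x - y)) / ‖y‖ ^ ((n : ℝ) + 2 * s) = f x)
    (h₂eq : ∀ x ∈ Ω,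
      MeasureTheory.Integrable (fun y : EuclideanSpace ℝ (Fin n) =>
        (2 * u₂ x - u₂ (x + y) - u₂ (x - y)) / ‖y‖ ^ ((n : ℝ) + 2 * s)) ∧
      fracC n hn s / 2 *
        ∫ y : EuclideanSpace ℝ (Fin n),
          (2 * u₂ x - u₂ (x + y) - u₂ (x - y)) / ‖y‖ ^ ((n : ℝ) + 2 * s) = f x) :
    u₁ = u₂ := by
  have : Nonempty (Fin n) := ⟨⟨0, hn⟩⟩
  exact fractional_dirichlet_uniqueness_general (μ := volume)
    (fun y hy => div_pos (half_pos (fracC_pos n hn hs))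
      (Real.rpow_pos_of_pos (norm_pos_iff.2 hy) _))
    hΩb.isCompact_closure h₁cont.continuousOn h₂cont.continuousOn
    (fun x hx => (h₁ext x hx).trans (h₂ext x hx).symm)
    (fun x hx => .of_const_mul (h₁eq x hx)) (fun x hx => .of_const_mul (h₂eq x hx))
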